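/- arXiv:1907.09166 — 2 statements merged into one kernel-verified Lean document; each statement's English description precedes it below -/
import Mathlib

section
/- Let V : ℝ^d → ℝ be smooth and b, ν : ℝ^d → ℝ^d be smooth vector fields satisfying the stationarity conditions ⟨b, ∇V⟩ = 0, div ν = 0 and div b = ⟨ν, ∇V⟩ everywhere on ℝ^d, and satisfying the confining assumption: there exist a constant C > 0 and a compact set K ⊂ ℝ^d such that V ≥ −C on ℝ^d, |∇V(x)| ≥ 1/C and ‖Hess V(x)‖ ≤ C|∇V(x)|² for all x ∉ K, and |b(x)| + |ν(x)| ≤ C(1 + |∇V(x)|) for all x ∈ ℝ^d. Then there exists h_0 ∈ (0,1] such that for every h ∈ (0,h_0], the only smooth square-integrable function f : ℝ^d → ℝ satisfying Δ_φf − ⟨b_h, d_φf⟩ + f = 0 everywhere on ℝ^d is f ≡ 0. -/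
/-!
The proof is an energy estimate, localised by a cutoff `χ` because `f` is only known to be square
integrable. Multiply the equation by `χ² f`. With `β = b + hν`, the stationarity conditions give
`div β = ⟨ν, ∇V⟩` and `⟨β, ∇V⟩ = h ⟨ν, ∇V⟩`, so the drift term is a divergence up to
`h χ f² ⟨β, ∇χ⟩`, and altogether (`pointwise_bound`)

`h div(h χ² f ∇f + χ² f² β / 2) = h² χ² |∇f|² + 2 h² χ f ⟨∇χ, ∇f⟩`
`    + (|∇V|² / 4 - h ΔV / 2) χ² f² + h χ f² ⟨β, ∇χ⟩ + χ² f²`.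

The first two terms on the right are at least `-h² f² |∇χ|²`. For small `h` the bound on the Hessian
off `K`, and compactness of `K` (`exists_lap_bound`), give `h ΔV ≤ (|∇V|² + 1) / 4`. The field `β` may
grow like `|∇V|`, but the resulting error `C (1 + |∇V|) χ |∇χ| f²` is absorbed by Young's inequality
into `|∇V|² χ² f² / 8` and `χ² f² / 4`, at the cost of `O(|∇χ|²) f²`. Integrating, the divergence of
the compactly supported flux disappears (`integral_divg_eq_zero`), and for `χ = χ_n` with
`|∇χ_n| = O(1 / n)` this leaves `∫ χ_n² f² = O(n⁻²) ∫ f²`, so `∫ f² = 0` (`eq_zero_of_cutoff`).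
-/

open MeasureTheory

/-- Partial derivative `∂_i f` of a real-valued function on `ℝ^d`. -/
noncomputable def pdR {d : ℕ} (f : (Fin d → ℝ) → ℝ) (i : Fin d) : (Fin d → ℝ) → ℝ :=
  fun x => fderiv ℝ f x (Pi.single i 1)

/-- Euclidean gradient `∇V` of a real-valued function. -/
noncomputable def gradV {d : ℕ} (V : (Fin d → ℝ) → ℝ) (x : Fin d → ℝ) : Fin d → ℝ :=
  fun i => pdR V i x

/-- Laplacian of a real-valued function. -/
noncomputable def lapR {d : ℕ} (f : (Fin d → ℝ) → ℝ) : (Fin d → ℝ) → ℝ :=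
  fun x => ∑ i, pdR (pdR f i) i x

/-- Euclidean divergence of a vector field on `ℝ^d`. -/
noncomputable def divg {d : ℕ} (w : (Fin d → ℝ) → Fin d → ℝ) : (Fin d → ℝ) → ℝ :=
  fun x => ∑ i, pdR (fun y => w y i) i x

/-- Hessian matrix of `V`, with entries `∂_i ∂_j V(x)`. -/
noncomputable def hessM {d : ℕ} (V : (Fin d → ℝ) → ℝ) (x : Fin d → ℝ) :
    Matrix (Fin d) (Fin d) ℝ :=
  fun i j => pdR (pdR V j) i x

/-- Euclidean norm of a vector of `ℝ^d`. -/
noncomputable def enorm2 {d : ℕ} (w : Fin d → ℝ) : ℝ :=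
  Real.sqrt (∑ i, w i ^ 2)

/-- The twisted derivative `d_φ f = h∇f + f∇φ`, `φ = V/2`, in direction `i`. -/
noncomputable def dphiR {d : ℕ} (h : ℝ) (V : (Fin d → ℝ) → ℝ) (f : (Fin d → ℝ) → ℝ)
    (i : Fin d) : (Fin d → ℝ) → ℝ :=
  fun x => h * pdR f i x + f x * (gradV V x i / 2)

/-- The semiclassical Witten Laplacian `Δ_φ f = −h²Δf + (|∇φ|² − hΔφ)f`, `φ = V/2`. -/
noncomputable def wittenR {d : ℕ} (h : ℝ) (V : (Fin d → ℝ) → ℝ) (f : (Fin d → ℝ) → ℝ) :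
    (Fin d → ℝ) → ℝ :=
  fun x => -(h ^ 2) * lapR f x +
    ((∑ i, (gradV V x i / 2) ^ 2) - h * (divg (gradV V) x / 2)) * f x


/-! ### Partial derivatives, divergence theorem, Euclidean norm -/

section Calculus

variable {d : ℕ}

lemma contDiff_pdR {f : (Fin d → ℝ) → ℝ} (hf : ContDiff ℝ (⊤ : ℕ∞) f) (i : Fin d) :
    ContDiff ℝ (⊤ : ℕ∞) (pdR f i) :=
  (hf.fderiv_right (m := (⊤ : ℕ∞)) (by simp)).clm_apply contDiff_const

lemma pdR_add {f g : (Fin d → ℝ) → ℝ} {x : Fin d → ℝ} (hf : DifferentiableAt ℝ f x)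
    (hg : DifferentiableAt ℝ g x) (i : Fin d) :
    pdR (fun y => f y + g y) i x = pdR f i x + pdR g i x := by
  simp only [pdR, fderiv_fun_add hf hg, add_apply]

lemma pdR_mul {f g : (Fin d → ℝ) → ℝ} {x : Fin d → ℝ} (hf : DifferentiableAt ℝ f x)
    (hg : DifferentiableAt ℝ g x) (i : Fin d) :
    pdR (fun y => f y * g y) i x = f x * pdR g i x + g x * pdR f i x := by
  simp only [pdR, fderiv_fun_mul hf hg, add_apply,
    smul_apply, smul_eq_mul]

lemma pdR_const_mul {f : (Fin d → ℝ) → ℝ} {x : Fin d → ℝ} (hf : DifferentiableAt ℝ f x)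
    (c : ℝ) (i : Fin d) : pdR (fun y => c * f y) i x = c * pdR f i x := by
  simp only [pdR, fderiv_const_mul hf, smul_apply, smul_eq_mul]

lemma hasCompactSupport_pdR {f : (Fin d → ℝ) → ℝ} (hf : HasCompactSupport f) (i : Fin d) :
    HasCompactSupport (pdR f i) :=
  hf.fderiv_apply (𝕜 := ℝ) _

lemma integral_pdR_eq_zero {w : (Fin d → ℝ) → ℝ} (hw : ContDiff ℝ (⊤ : ℕ∞) w)
    (hc : HasCompactSupport w) (i : Fin d) : ∫ x, pdR w i x = 0 := by
  have hi : Integrable (pdR w i) :=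
    (contDiff_pdR hw i).continuous.integrable_of_hasCompactSupport (hasCompactSupport_pdR hc i)
  have hwi : Integrable w := hw.continuous.integrable_of_hasCompactSupport hc
  have := integral_mul_fderiv_eq_neg_fderiv_mul_of_integrable (𝕜 := ℝ)
    (μ := (volume : Measure (Fin d → ℝ))) (f := fun _ => (1 : ℝ)) (g := w)
    (v := Pi.single i 1) (by simp) (by simp only [one_mul]; exact hi) (by simpa using hwi)
    (fun _ _ => differentiableAt_const _) (fun x _ => hw.differentiable (by simp) x)
  simpa [pdR] using this

lemma integral_divg_eq_zero {w : (Fin d → ℝ) → Fin d → ℝ}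
    (hw : ∀ i, ContDiff ℝ (⊤ : ℕ∞) fun y => w y i)
    (hc : ∀ i, HasCompactSupport fun y => w y i) :
    Integrable (divg w) ∧ ∫ x, divg w x = 0 := by
  have hi : ∀ i, Integrable (pdR (fun y => w y i) i) := fun i =>
    (contDiff_pdR (hw i) i).continuous.integrable_of_hasCompactSupport
      (hasCompactSupport_pdR (hc i) i)
  refine ⟨integrable_finsetSum _ fun i _ => hi i, ?_⟩
  simp only [divg]
  rw [integral_finsetSum _ fun i _ => hi i]
  exact Finset.sum_eq_zero fun i _ => integral_pdR_eq_zero (hw i) (hc i) i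

lemma enorm2_sq (w : Fin d → ℝ) : enorm2 w ^ 2 = ∑ i, w i ^ 2 :=
  Real.sq_sqrt (Finset.sum_nonneg fun i _ => sq_nonneg (w i))

lemma enorm2_nonneg (w : Fin d → ℝ) : 0 ≤ enorm2 w := Real.sqrt_nonneg _

lemma abs_sum_mul_le (u w : Fin d → ℝ) : |∑ i, u i * w i| ≤ enorm2 u * enorm2 w := by
  refine abs_le.2 ⟨?_, Real.sum_mul_le_sqrt_mul_sqrt _ _ _⟩
  have := Real.sum_mul_le_sqrt_mul_sqrt Finset.univ (fun i => -u i) w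
  simp only [neg_mul, Finset.sum_neg_distrib, neg_sq] at this
  exact neg_le.1 this

lemma enorm2_add_mul_le {h : ℝ} (hh : 0 ≤ h) (u w : Fin d → ℝ) :
    enorm2 (fun i => u i + h * w i) ≤ enorm2 u + h * enorm2 w := by
  have h1 := (abs_le.1 (abs_sum_mul_le u w)).2
  have hu := enorm2_nonneg u
  have hw := enorm2_nonneg w
  refine (abs_le_of_sq_le_sq' ?_ (by positivity)).2
  have h2 : enorm2 (fun i => u i + h * w i) ^ 2
      = enorm2 u ^ 2 + 2 * h * (∑ i, u i * w i) + h ^ 2 * enorm2 w ^ 2 := by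
    simp only [enorm2_sq, Finset.mul_sum, ← Finset.sum_add_distrib]
    exact Finset.sum_congr rfl fun i _ => by ring
  rw [h2]
  nlinarith [mul_le_mul_of_nonneg_left h1 hh]

end Calculus

/-! ### Cutoffs -/

/-- Rescaled cutoffs `χ(x / (n + 1))`: they tend to `1` pointwise and their gradients are `O(1 / n)`.
The scale is `n + 1`, which avoids `n = 0`. -/
lemma exists_cutoff (d : ℕ) : ∃ (M : ℝ) (χ : ℕ → (Fin d → ℝ) → ℝ),
    (∀ n, ContDiff ℝ (⊤ : ℕ∞) (χ n)) ∧ (∀ n, HasCompactSupport (χ n)) ∧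
    (∀ n x, 0 ≤ χ n x ∧ χ n x ≤ 1) ∧
    (∀ x, ∀ᶠ n in Filter.atTop, χ n x = 1) ∧
    (∀ (n : ℕ) x, ∑ i, pdR (χ n) i x ^ 2 ≤ M * (1 / ((n : ℝ) + 1)) ^ 2) := by
  let B : ContDiffBump (0 : Fin d → ℝ) := ⟨1, 2, one_pos, one_lt_two⟩
  have hB : ContDiff ℝ (⊤ : ℕ∞) B := B.contDiff
  have hS : Continuous fun x => ∑ i, pdR B i x ^ 2 :=
    continuous_finsetSum _ fun i _ => (contDiff_pdR hB i).continuous.pow 2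
  have hSc : HasCompactSupport fun x => ∑ i, pdR B i x ^ 2 := by
    refine HasCompactSupport.intro (B.hasCompactSupport.fderiv (𝕜 := ℝ)) fun x hx => ?_
    simp [pdR, image_eq_zero_of_notMem_tsupport hx]
  obtain ⟨M, hM⟩ := hSc.exists_bound_of_continuous hS
  have hpos : ∀ n : ℕ, (0 : ℝ) < 1 / ((n : ℝ) + 1) := fun n => Nat.one_div_pos_of_nat
  refine ⟨M, fun n x => B ((1 / ((n : ℝ) + 1)) • x), fun n => hB.comp (contDiff_const_smul _),
    fun n => B.hasCompactSupport.comp_smul (hpos n).ne', fun n x => ⟨B.nonneg, B.le_one⟩,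
    fun x => ?_, fun n x => ?_⟩
  · filter_upwards [Filter.eventually_ge_atTop ⌈‖x‖⌉₊] with n hn
    apply B.one_of_mem_closedBall
    have h1 : ‖x‖ ≤ n := Nat.ceil_le.1 hn
    rw [mem_closedBall_zero_iff, norm_smul, Real.norm_of_nonneg (hpos n).le]
    change _ ≤ (1 : ℝ)
    rw [one_div, inv_mul_le_iff₀ (by positivity)]
    linarith
  · have key : ∀ i, pdR (fun x => B ((1 / ((n : ℝ) + 1)) • x)) i x
        = (1 / ((n : ℝ) + 1)) * pdR B i ((1 / ((n : ℝ) + 1)) • x) := fun i => by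
      simp only [pdR]
      rw [fderiv_comp_smul]
      simp
    simp only [key, mul_pow, ← Finset.mul_sum]
    rw [mul_comm]
    exact mul_le_mul_of_nonneg_right ((le_abs_self _).trans (hM _)) (by positivity)

/-! ### The localised energy estimate -/

/-- The partial derivative `∂_i` of the `i`-th component of the flux
`h χ² f ∇f + χ² f² β / 2` used to localise the energy estimate. -/
lemma pdR_flux {d : ℕ} {χ f β : (Fin d → ℝ) → ℝ} (hχ : ContDiff ℝ (⊤ : ℕ∞) χ)
    (hf : ContDiff ℝ (⊤ : ℕ∞) f) (hβ : ContDiff ℝ (⊤ : ℕ∞) β) (h : ℝ) (i : Fin d)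
    (x : Fin d → ℝ) :
    pdR (fun y => χ y * (χ y * (f y * (h * pdR f i y + 1 / 2 * (f y * β y))))) i x =
      h * (2 * χ x * f x * (pdR f i x * pdR χ i x) + χ x ^ 2 * pdR f i x ^ 2
        + χ x ^ 2 * f x * pdR (pdR f i) i x)
      + (χ x * f x ^ 2 * (β x * pdR χ i x) + χ x ^ 2 * f x * (β x * pdR f i x)
        + χ x ^ 2 * f x ^ 2 / 2 * pdR β i x) := by
  have dχ : Differentiable ℝ χ := hχ.differentiable (by simp)
  have df : Differentiable ℝ f := hf.differentiable (by simp)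
  have dβ : Differentiable ℝ β := hβ.differentiable (by simp)
  have dp : Differentiable ℝ (pdR f i) := (contDiff_pdR hf i).differentiable (by simp)
  rw [pdR_mul (by fun_prop) (by fun_prop), pdR_mul (by fun_prop) (by fun_prop),
    pdR_mul (by fun_prop) (by fun_prop), pdR_add (by fun_prop) (by fun_prop),
    pdR_const_mul (by fun_prop), pdR_const_mul (by fun_prop), pdR_mul (by fun_prop) (by fun_prop)]
  ring

/-- Summed form of `pdR_flux`. -/
lemma divg_flux {d : ℕ} {χ f : (Fin d → ℝ) → ℝ} {β : (Fin d → ℝ) → Fin d → ℝ}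
    (hχ : ContDiff ℝ (⊤ : ℕ∞) χ) (hf : ContDiff ℝ (⊤ : ℕ∞) f)
    (hβ : ∀ i, ContDiff ℝ (⊤ : ℕ∞) fun y => β y i) (h : ℝ) (x : Fin d → ℝ) :
    divg (fun y i => χ y * (χ y * (f y * (h * pdR f i y + 1 / 2 * (f y * β y i))))) x =
      h * (2 * χ x * f x * (∑ i, pdR f i x * pdR χ i x) + χ x ^ 2 * (∑ i, pdR f i x ^ 2)
        + χ x ^ 2 * f x * lapR f x)
      + (χ x * f x ^ 2 * (∑ i, β x i * pdR χ i x) + χ x ^ 2 * f x * (∑ i, β x i * pdR f i x)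
        + χ x ^ 2 * f x ^ 2 / 2 * divg β x) := by
  simp only [divg, lapR, Finset.mul_sum, ← Finset.sum_add_distrib]
  exact Finset.sum_congr rfl fun i _ => by
    rw [pdR_flux hχ hf (hβ i)]

/-- If `h ΔV` is dominated by `(|∇V|² + 1)/4` and the drift by `C (1 + |∇V|)`, then all the
first-order and potential terms of the energy identity are absorbed, and what remains of the
equation multiplied by `χ² f` is `χ² f² / 2 ≤ h div(flux) + O(|∇χ|²) f²`. The conditions on
`div β` and `⟨β, ∇V⟩` make the terms `χ² f² ⟨ν, ∇V⟩` cancel, so that only `⟨β, ∇χ⟩` survives from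
the drift. -/
lemma pointwise_bound {d : ℕ} {V χ f : (Fin d → ℝ) → ℝ} {β ν : (Fin d → ℝ) → Fin d → ℝ}
    {h C : ℝ} (hh : 0 < h) (hh1 : h ≤ 1)
    (hχ : ContDiff ℝ (⊤ : ℕ∞) χ) (hf : ContDiff ℝ (⊤ : ℕ∞) f)
    (hβ : ∀ i, ContDiff ℝ (⊤ : ℕ∞) fun y => β y i) (x : Fin d → ℝ) (hχ0 : 0 ≤ χ x)
    (hdiv : divg β x = ∑ i, ν x i * gradV V x i)
    (hβV : ∑ i, β x i * gradV V x i = h * ∑ i, ν x i * gradV V x i)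
    (hβC : enorm2 (β x) ≤ C * (1 + enorm2 (gradV V x)))
    (hlap : h * divg (gradV V) x ≤ enorm2 (gradV V x) ^ 2 / 4 + 1 / 4)
    (heq : wittenR h V f x - (∑ i, β x i * dphiR h V f i x) + f x = 0) :
    1 / 2 * (χ x ^ 2 * f x ^ 2) ≤
      h * divg (fun y i => χ y * (χ y * (f y * (h * pdR f i y + 1 / 2 * (f y * β y i))))) x
        + (1 + 3 * C ^ 2) * ((∑ i, pdR χ i x ^ 2) * f x ^ 2) := by
  rw [divg_flux hχ hf hβ, hdiv]
  have hdphi : ∑ i, β x i * dphiR h V f i x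
      = h * (∑ i, β x i * pdR f i x) + f x / 2 * (h * ∑ i, ν x i * gradV V x i) := by
    rw [← hβV]
    simp only [dphiR, Finset.mul_sum, ← Finset.sum_add_distrib]
    exact Finset.sum_congr rfl fun i _ => by ring
  have hquad : ∑ i, (gradV V x i / 2) ^ 2 = enorm2 (gradV V x) ^ 2 / 4 := by
    rw [enorm2_sq, Finset.sum_div]
    exact Finset.sum_congr rfl fun i _ => by ring
  rw [hdphi, wittenR, hquad] at heq
  have hT := abs_sum_mul_le (β x) (fun i => pdR χ i x)
  have hgN : enorm2 (fun i => pdR χ i x) ^ 2 = ∑ i, pdR χ i x ^ 2 := enorm2_sq _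
  have hg0 : 0 ≤ enorm2 (fun i => pdR χ i x) := enorm2_nonneg _
  -- Completing the square in the gradient term.
  have hsq : 0 ≤ χ x ^ 2 * (∑ i, pdR f i x ^ 2) + 2 * χ x * f x * (∑ i, pdR f i x * pdR χ i x)
      + (∑ i, pdR χ i x ^ 2) * f x ^ 2 := by
    have : χ x ^ 2 * (∑ i, pdR f i x ^ 2) + 2 * χ x * f x * (∑ i, pdR f i x * pdR χ i x)
        + (∑ i, pdR χ i x ^ 2) * f x ^ 2 = ∑ i, (χ x * pdR f i x + f x * pdR χ i x) ^ 2 := by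
      simp only [Finset.mul_sum, Finset.sum_mul, ← Finset.sum_add_distrib]
      exact Finset.sum_congr rfl fun i _ => by ring
    rw [this]
    exact Finset.sum_nonneg fun i _ => sq_nonneg _
  have hG0 : 0 ≤ enorm2 (gradV V x) := enorm2_nonneg _
  rw [← hgN] at hsq ⊢
  generalize enorm2 (fun i => pdR χ i x) = g at *
  generalize enorm2 (gradV V x) = G at *
  generalize (∑ i, β x i * pdR χ i x) = P at *
  generalize (∑ i, β x i * pdR f i x) = Q at *
  generalize (∑ i, ν x i * gradV V x i) = N at *
  generalize (∑ i, pdR f i x * pdR χ i x) = B at *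
  generalize (∑ i, pdR f i x ^ 2) = A at *
  generalize divg (gradV V) x = D at *
  generalize lapR f x = L at *
  generalize χ x = c at *
  generalize f x = u at *
  -- The drift term, by Young's inequality.
  have hP : -(c ^ 2 / 4 + c ^ 2 * G ^ 2 / 8 + 3 * C ^ 2 * g ^ 2) ≤ h * (c * P) := by
    have h1 : |P| ≤ C * (1 + G) * g := hT.trans (mul_le_mul_of_nonneg_right hβC hg0)
    have h2 : |h * (c * P)| ≤ c * (C * (1 + G) * g) := by
      rw [abs_mul, abs_mul, abs_of_pos hh, abs_of_nonneg hχ0]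
      calc h * (c * |P|) ≤ 1 * (c * |P|) := by gcongr
        _ ≤ c * (C * (1 + G) * g) := by rw [one_mul]; gcongr
    have h3 := (abs_le.1 h2).1
    nlinarith [sq_nonneg (c / 2 - C * g), sq_nonneg (c * G - 4 * (C * g))]
  have hPu := mul_le_mul_of_nonneg_right hP (sq_nonneg u)
  have hlapu := mul_le_mul_of_nonneg_right hlap (mul_nonneg (sq_nonneg c) (sq_nonneg u))
  have hsqh := mul_nonneg (sq_nonneg h) hsq
  have hgu : h ^ 2 * (g ^ 2 * u ^ 2) ≤ 1 * (g ^ 2 * u ^ 2) := by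
    gcongr
    nlinarith
  have heqm : c ^ 2 * u * (-h ^ 2 * L + (G ^ 2 / 4 - h * (D / 2)) * u
      - (h * Q + u / 2 * (h * N)) + u) = 0 := by rw [heq, mul_zero]
  have hcu : 0 ≤ c ^ 2 * u ^ 2 := by positivity
  linarith

/-! ### Passing to the limit -/

/-- The cutoff argument: an `L²` bound `∫ χ_n² f² = O(n⁻²)` forces `f = 0`. -/
lemma eq_zero_of_cutoff {d : ℕ} {f : (Fin d → ℝ) → ℝ} (hf : Continuous f)
    (hf2 : Integrable fun x => f x ^ 2) {χ : ℕ → (Fin d → ℝ) → ℝ}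
    (hχc : ∀ n, Continuous (χ n)) (hχ : ∀ n x, 0 ≤ χ n x ∧ χ n x ≤ 1)
    (hχ1 : ∀ x, ∀ᶠ n in Filter.atTop, χ n x = 1) {R : ℝ}
    (hR : ∀ n : ℕ, ∫ x, χ n x ^ 2 * f x ^ 2 ≤ R * (1 / ((n : ℝ) + 1)) ^ 2) : f = 0 := by
  have hlim : Filter.Tendsto (fun n => ∫ x, χ n x ^ 2 * f x ^ 2) Filter.atTop
      (nhds (∫ x, f x ^ 2)) := by
    refine tendsto_integral_of_dominated_convergence (fun x => f x ^ 2)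
      (fun n => (((hχc n).pow 2).mul (hf.pow 2)).aestronglyMeasurable) hf2
      (fun n => ae_of_all _ fun x => ?_) (ae_of_all _ fun x => ?_)
    · rw [Real.norm_of_nonneg (by positivity)]
      exact mul_le_of_le_one_left (sq_nonneg _) (pow_le_one₀ (hχ n x).1 (hχ n x).2)
    · refine tendsto_const_nhds.congr' ?_
      filter_upwards [hχ1 x] with n hn
      rw [hn, one_pow, one_mul]
  have hzero : Filter.Tendsto (fun n : ℕ => R * (1 / ((n : ℝ) + 1)) ^ 2) Filter.atTop (nhds 0) := by
    simpa using (tendsto_one_div_add_atTop_nhds_zero_nat (𝕜 := ℝ)).pow 2 |>.const_mul R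
  have hint : ∫ x, f x ^ 2 = 0 :=
    le_antisymm (le_of_tendsto_of_tendsto' hlim hzero hR) (integral_nonneg fun x => sq_nonneg _)
  rw [integral_eq_zero_iff_of_nonneg (fun x => sq_nonneg _) hf2] at hint
  have hf0 := ((hf.pow 2).ae_eq_iff_eq volume continuous_zero).1 hint
  ext x
  simpa using congrFun hf0 x

/-- `ΔV` is bounded by a multiple of `|∇V|²` off `K` and by a constant on `K`, hence everywhere
by the sum of the two. -/
lemma exists_lap_bound {d : ℕ} {V : (Fin d → ℝ) → ℝ} (hV : ContDiff ℝ (⊤ : ℕ∞) V) {C : ℝ}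
    (hC : 0 < C) {K : Set (Fin d → ℝ)} (hK : IsCompact K)
    (hhess : ∀ x ∉ K, ∀ i j, |hessM V x i j| ≤ C * (enorm2 (gradV V x)) ^ 2) :
    ∃ T : ℝ, 0 < T ∧ ∀ x, divg (gradV V) x ≤ T * (enorm2 (gradV V x) ^ 2 + 1) := by
  have hc : Continuous (divg (gradV V)) :=
    continuous_finsetSum _ fun i _ => (contDiff_pdR (contDiff_pdR hV i) i).continuous
  obtain ⟨M, hM⟩ := hK.exists_bound_of_continuousOn hc.continuousOn
  refine ⟨d * C + |M| + 1, by positivity, fun x => ?_⟩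
  have hG := sq_nonneg (enorm2 (gradV V x))
  have h1 : divg (gradV V) x ≤ d * C * enorm2 (gradV V x) ^ 2 + |M| := by
    by_cases hx : x ∈ K
    · have := (le_abs_self _).trans ((hM x hx).trans (le_abs_self M))
      have : 0 ≤ d * C * enorm2 (gradV V x) ^ 2 := by positivity
      linarith
    · have : divg (gradV V) x ≤ ∑ _i : Fin d, C * enorm2 (gradV V x) ^ 2 :=
        Finset.sum_le_sum fun i _ => (le_abs_self _).trans (hhess x hx i i)
      rw [Finset.sum_const, Finset.card_univ, Fintype.card_fin, nsmul_eq_mul] at this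
      have := abs_nonneg M
      linarith
  have h2 : 0 ≤ (|M| + 1) * enorm2 (gradV V x) ^ 2 := by positivity
  have h3 : 0 ≤ d * C + 1 := by positivity
  linarith

/-- For small `h`, the only smooth square-integrable solution of
`Δ_φ f − ⟨b_h, d_φ f⟩ + f = 0` on `ℝ^d` is `f ≡ 0` (injectivity of `P_φ^* + 1`). -/
theorem Pphi_star_add_one_injective
    (d : ℕ) (hd : 1 ≤ d)
    (V : (Fin d → ℝ) → ℝ) (b ν : (Fin d → ℝ) → Fin d → ℝ)
    (hV : ContDiff ℝ (⊤ : ℕ∞) V) (hb : ContDiff ℝ (⊤ : ℕ∞) b) (hν : ContDiff ℝ (⊤ : ℕ∞) ν)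
    (hstat₁ : ∀ x, ∑ i, b x i * gradV V x i = 0)
    (hstat₂ : ∀ x, divg ν x = 0)
    (hstat₃ : ∀ x, divg b x = ∑ i, ν x i * gradV V x i)
    (Cc : ℝ) (hCc : 0 < Cc) (K : Set (Fin d → ℝ)) (hK : IsCompact K)
    (hVlb : ∀ x, -Cc ≤ V x)
    (hgrad : ∀ x ∉ K, 1 / Cc ≤ enorm2 (gradV V x))
    (hhess : ∀ x ∉ K, ∀ i j, |hessM V x i j| ≤ Cc * (enorm2 (gradV V x)) ^ 2)
    (hbν : ∀ x, enorm2 (b x) + enorm2 (ν x) ≤ Cc * (1 + enorm2 (gradV V x))) :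
    ∃ h₀ : ℝ, 0 < h₀ ∧ h₀ ≤ 1 ∧
      ∀ h : ℝ, 0 < h → h ≤ h₀ →
      ∀ f : (Fin d → ℝ) → ℝ, ContDiff ℝ (⊤ : ℕ∞) f →
        Integrable (fun x : Fin d → ℝ => (f x) ^ 2) →
        (∀ x, wittenR h V f x - (∑ i, (b x i + h * ν x i) * dphiR h V f i x) + f x = 0) →
        f = 0 := by
  obtain ⟨T, hT, hlap⟩ := exists_lap_bound hV hCc hK hhess
  obtain ⟨M, χ, hχs, hχc, hχ01, hχ1, hχM⟩ := exists_cutoff d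
  refine ⟨min 1 (1 / (4 * T)), by positivity, min_le_left _ _, fun h hh hh₀ f hf hf2 heq => ?_⟩
  have hh1 : h ≤ 1 := hh₀.trans (min_le_left _ _)
  have hhT : h * T ≤ 1 / 4 := by
    have := (le_div_iff₀ (by positivity)).1 (hh₀.trans (min_le_right _ _))
    linarith
  have hbi : ∀ i, ContDiff ℝ (⊤ : ℕ∞) fun y => b y i := contDiff_pi.1 hb
  have hνi : ∀ i, ContDiff ℝ (⊤ : ℕ∞) fun y => ν y i := contDiff_pi.1 hν
  have hβ : ∀ i, ContDiff ℝ (⊤ : ℕ∞) fun y => b y i + h * ν y i :=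
    fun i => (hbi i).add (contDiff_const.mul (hνi i))
  have hdiv : ∀ x, divg (fun y i => b y i + h * ν y i) x = ∑ i, ν x i * gradV V x i := by
    intro x
    have : divg (fun y i => b y i + h * ν y i) x = divg b x + h * divg ν x := by
      simp only [divg, Finset.mul_sum, ← Finset.sum_add_distrib]
      refine Finset.sum_congr rfl fun i _ => ?_
      have h1 := (hbi i).differentiable (by simp) x
      have h2 := (hνi i).differentiable (by simp) x
      rw [pdR_add h1 (h2.const_mul h), pdR_const_mul h2]
    rw [this, hstat₂, hstat₃, mul_zero, add_zero]
  have hβV : ∀ x, ∑ i, (b x i + h * ν x i) * gradV V x i = h * ∑ i, ν x i * gradV V x i := by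
    intro x
    have := hstat₁ x
    simp only [add_mul, Finset.sum_add_distrib, this, Finset.mul_sum, zero_add, mul_assoc]
  have hβC : ∀ x, enorm2 (fun i => b x i + h * ν x i) ≤ Cc * (1 + enorm2 (gradV V x)) := by
    intro x
    have h0 := enorm2_nonneg (ν x)
    have := enorm2_add_mul_le hh.le (b x) (ν x)
    nlinarith [hbν x]
  have hfc : Continuous f := hf.continuous
  refine eq_zero_of_cutoff hfc hf2 (fun n => (hχs n).continuous) hχ01 hχ1
    (R := 2 * ((1 + 3 * Cc ^ 2) * (M * ∫ x, f x ^ 2))) fun n => ?_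
  set w : (Fin d → ℝ) → Fin d → ℝ := fun y i =>
    χ n y * (χ n y * (f y * (h * pdR f i y + 1 / 2 * (f y * (b y i + h * ν y i))))) with hw
  obtain ⟨hwi, hw0⟩ := integral_divg_eq_zero (w := w)
    (fun i => (hχs n).mul ((hχs n).mul (hf.mul ((contDiff_const.mul (contDiff_pdR hf i)).add
      (contDiff_const.mul (hf.mul (hβ i)))))))
    (fun i => (hχc n).mul_right)
  -- The cutoff error is `O(n⁻²) f²`, uniformly in `x`.
  have hpt : ∀ x, χ n x ^ 2 * f x ^ 2 ≤ 2 * h * divg w x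
      + 2 * ((1 + 3 * Cc ^ 2) * (M * (1 / ((n : ℝ) + 1)) ^ 2)) * f x ^ 2 := by
    intro x
    have hl : h * divg (gradV V) x ≤ enorm2 (gradV V x) ^ 2 / 4 + 1 / 4 := by
      have h1 := mul_le_mul_of_nonneg_left (hlap x) hh.le
      have h2 := mul_le_mul_of_nonneg_right hhT
        (by positivity : 0 ≤ enorm2 (gradV V x) ^ 2 + 1)
      linarith
    have h1 := pointwise_bound (ν := ν) (β := fun y i => b y i + h * ν y i) hh hh1 (hχs n) hf hβ x
      (hχ01 n x).1 (hdiv x) (hβV x) (hβC x) hl (heq x)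
    have h2 : (1 + 3 * Cc ^ 2) * ((∑ i, pdR (χ n) i x ^ 2) * f x ^ 2)
        ≤ (1 + 3 * Cc ^ 2) * ((M * (1 / ((n : ℝ) + 1)) ^ 2) * f x ^ 2) := by
      gcongr
      exact hχM n x
    linarith
  have hI : Integrable fun x => χ n x ^ 2 * f x ^ 2 := by
    have : (fun x => χ n x ^ 2 * f x ^ 2) = fun x => χ n x * (χ n x * f x ^ 2) := by
      ext x; ring
    rw [this]
    have hχn := (hχs n).continuous
    exact (hχn.mul (hχn.mul (hfc.pow 2))).integrable_of_hasCompactSupport (hχc n).mul_right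
  calc ∫ x, χ n x ^ 2 * f x ^ 2
      ≤ ∫ x, (2 * h * divg w x
        + 2 * ((1 + 3 * Cc ^ 2) * (M * (1 / ((n : ℝ) + 1)) ^ 2)) * f x ^ 2) :=
        integral_mono hI ((hwi.const_mul _).add (hf2.const_mul _)) hpt
    _ = 2 * ((1 + 3 * Cc ^ 2) * (M * ∫ x, f x ^ 2)) * (1 / ((n : ℝ) + 1)) ^ 2 := by
        rw [integral_add (hwi.const_mul _) (hf2.const_mul _), integral_const_mul,
          integral_const_mul, hw0]
        ring
end

section
/- Let V : ℝ^d → ℝ be a smooth function and U_0, ν : ℝ^d → ℝ^d be smooth vector fields; for h ∈ (0,1] set U_h := U_0 + hν and set b := U_0 − ∇V. Then the following are equivalent: (a) for every h ∈ (0,1], div(h∇(e^{−V/h}) + U_h·e^{−V/h}) = 0 everywhere on ℝ^d (i.e. e^{−V/h} is annihilated by the Fokker–Planck operator L† = −div∘(h∇ + U_h) for every h ∈ (0,1]); (b) ⟨b, ∇V⟩ = 0, div ν = 0 and div b = ⟨ν, ∇V⟩ everywhere on ℝ^d. -/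
lemma hasFDerivAt_exp_neg_div {d : ℕ} {V : (Fin d → ℝ) → ℝ} {x : Fin d → ℝ}
    (hV : DifferentiableAt ℝ V x) (h : ℝ) :
    HasFDerivAt (fun z => Real.exp (-V z / h))
      (Real.exp (-V x / h) • (-h⁻¹) • fderiv ℝ V x) x := by
  have h1 : HasFDerivAt (fun z => -V z / h) ((-h⁻¹) • fderiv ℝ V x) x := by
    refine (hV.hasFDerivAt.const_mul (-h⁻¹)).congr_of_eventuallyEq
      (Filter.Eventually.of_forall fun z => ?_)
    simp only [div_eq_mul_inv]
    ring
  exact h1.exp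

lemma pdR_exp_neg_div {d : ℕ} {V : (Fin d → ℝ) → ℝ} {x : Fin d → ℝ}
    (hV : DifferentiableAt ℝ V x) (h : ℝ) (i : Fin d) :
    pdR (fun z => Real.exp (-V z / h)) i x = -(pdR V i x / h) * Real.exp (-V x / h) := by
  simp only [pdR, (hasFDerivAt_exp_neg_div hV h).fderiv, smul_apply, smul_eq_mul]
  ring

/-- The product rule `div (w ρ) = ρ div w + ⟨w, ∇ρ⟩` for the Gibbs density `ρ = e^{-V/h}`, whose
gradient is `-h⁻¹ ρ ∇V`. -/
lemma divg_mul_exp {d : ℕ} {V : (Fin d → ℝ) → ℝ} {w : (Fin d → ℝ) → Fin d → ℝ} {x : Fin d → ℝ}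
    (hV : DifferentiableAt ℝ V x) (hw : ∀ i, DifferentiableAt ℝ (fun y => w y i) x) (h : ℝ) :
    divg (fun y i => w y i * Real.exp (-V y / h)) x
      = Real.exp (-V x / h) * (divg w x - (∑ i, w x i * gradV V x i) / h) := by
  simp only [divg, Finset.sum_div, ← Finset.sum_sub_distrib, Finset.mul_sum]
  refine Finset.sum_congr rfl fun i _ => ?_
  have hm := (hw i).hasFDerivAt.mul (hasFDerivAt_exp_neg_div hV h)
  have hm' : fderiv ℝ (fun y => w y i * Real.exp (-V y / h)) x = _ := hm.fderiv
  simp only [pdR, gradV, hm', add_apply, smul_apply, smul_eq_mul]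
  ring

lemma divg_add_const_mul {d : ℕ} {v w : (Fin d → ℝ) → Fin d → ℝ} {x : Fin d → ℝ}
    (hv : ∀ i, DifferentiableAt ℝ (fun y => v y i) x)
    (hw : ∀ i, DifferentiableAt ℝ (fun y => w y i) x) (h : ℝ) :
    divg (fun y i => v y i + h * w y i) x = divg v x + h * divg w x := by
  simp only [divg, Finset.mul_sum, ← Finset.sum_add_distrib]
  refine Finset.sum_congr rfl fun i _ => ?_
  have hm := (hv i).hasFDerivAt.add ((hw i).hasFDerivAt.const_mul h)
  have hm' : fderiv ℝ (fun y => v y i + h * w y i) x = _ := hm.fderiv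
  simp only [pdR, hm', add_apply, smul_apply, smul_eq_mul]

/-- The divergence of the flux `h ∇(e^{-V/h}) + (U₀ + hν) e^{-V/h} = (b + hν) e^{-V/h}`, up to the
positive factor `e^{-V/h}`, with its powers of `h` separated. -/
lemma divg_flux_s18 {d : ℕ} {V : (Fin d → ℝ) → ℝ} {U₀ ν : (Fin d → ℝ) → Fin d → ℝ}
    (hV : ContDiff ℝ (⊤ : ℕ∞) V) (hU₀ : ContDiff ℝ (⊤ : ℕ∞) U₀) (hν : ContDiff ℝ (⊤ : ℕ∞) ν)
    {h : ℝ} (hh : h ≠ 0) (x : Fin d → ℝ) :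
    divg (fun y i =>
        h * pdR (fun z => Real.exp (-V z / h)) i y
          + (U₀ y i + h * ν y i) * Real.exp (-V y / h)) x
      = Real.exp (-V x / h) *
        (divg (fun y i => U₀ y i - gradV V y i) x - (∑ i, ν x i * gradV V x i)
          + h * divg ν x - (∑ i, (U₀ x i - gradV V x i) * gradV V x i) / h) := by
  have hVd : Differentiable ℝ V := hV.differentiable (by simp)
  have hG : ∀ i, Differentiable ℝ (fun y => gradV V y i) := fun i =>
    ((hV.fderiv_right (m := 1) (by norm_cast)).clm_apply
      contDiff_const).differentiable (by simp)
  have hU : ∀ i, Differentiable ℝ (fun y => U₀ y i) := fun i =>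
    differentiable_pi.1 (hU₀.differentiable (by simp)) i
  have hN : ∀ i, Differentiable ℝ (fun y => ν y i) := fun i =>
    differentiable_pi.1 (hν.differentiable (by simp)) i
  have hb : ∀ i, DifferentiableAt ℝ (fun y => U₀ y i - gradV V y i) x := fun i =>
    (hU i x).sub (hG i x)
  have hflux : (fun y i => h * pdR (fun z => Real.exp (-V z / h)) i y
          + (U₀ y i + h * ν y i) * Real.exp (-V y / h))
      = fun y i => ((U₀ y i - gradV V y i) + h * ν y i) * Real.exp (-V y / h) := by
    funext y i
    rw [pdR_exp_neg_div (hVd y) h i]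
    simp only [gradV]
    field_simp
    ring
  have hsum : ∑ i, ((U₀ x i - gradV V x i) + h * ν x i) * gradV V x i
      = (∑ i, (U₀ x i - gradV V x i) * gradV V x i) + h * ∑ i, ν x i * gradV V x i := by
    rw [Finset.mul_sum, ← Finset.sum_add_distrib]
    exact Finset.sum_congr rfl fun i _ => by ring
  rw [hflux, divg_mul_exp (w := fun y i => (U₀ y i - gradV V y i) + h * ν y i) (hVd x)
      (fun i => (hb i).add ((hN i x).const_mul h)) h,
    divg_add_const_mul (v := fun y i => U₀ y i - gradV V y i) hb (fun i => hN i x) h, hsum]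
  field_simp
  ring

/-- `e^{−V/h}` is a stationary measure of the Fokker–Planck operator
`L† = −div ∘ (h∇ + U_h)`, `U_h = U₀ + hν`, for every `h ∈ (0,1]`, if and only if,
with `b := U₀ − ∇V`: `⟨b, ∇V⟩ = 0`, `div ν = 0` and `div b = ⟨ν, ∇V⟩` on `ℝ^d`. -/
theorem stationary_measure_iff_structure_conditions
    (d : ℕ) (hd : 1 ≤ d)
    (V : (Fin d → ℝ) → ℝ) (U₀ ν : (Fin d → ℝ) → Fin d → ℝ)
    (hV : ContDiff ℝ (⊤ : ℕ∞) V) (hU₀ : ContDiff ℝ (⊤ : ℕ∞) U₀) (hν : ContDiff ℝ (⊤ : ℕ∞) ν) :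
    (∀ h : ℝ, 0 < h → h ≤ 1 → ∀ x : Fin d → ℝ,
        divg (fun y i =>
          h * pdR (fun z => Real.exp (-V z / h)) i y
            + (U₀ y i + h * ν y i) * Real.exp (-V y / h)) x = 0)
      ↔ ((∀ x, ∑ i, (U₀ x i - gradV V x i) * gradV V x i = 0) ∧
          (∀ x, divg ν x = 0) ∧
          (∀ x, divg (fun y i => U₀ y i - gradV V y i) x
            = ∑ i, ν x i * gradV V x i)) := by
  constructor
  · intro H
    have key : ∀ x, (∑ i, (U₀ x i - gradV V x i) * gradV V x i = 0) ∧ divg ν x = 0 ∧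
        divg (fun y i => U₀ y i - gradV V y i) x = ∑ i, ν x i * gradV V x i := by
      intro x
      have H' : ∀ h : ℝ, 0 < h → h ≤ 1 →
          divg (fun y i => U₀ y i - gradV V y i) x - (∑ i, ν x i * gradV V x i)
            + h * divg ν x - (∑ i, (U₀ x i - gradV V x i) * gradV V x i) / h = 0 := by
        intro h h0 h1
        have hx := H h h0 h1 x
        rw [divg_flux_s18 hV hU₀ hν h0.ne' x] at hx
        exact (mul_eq_zero.1 hx).resolve_left (Real.exp_ne_zero _)
      have e1 := H' 1 (by norm_num) (by norm_num)
      have e2 := H' (1 / 2) (by norm_num) (by norm_num)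
      have e3 := H' (1 / 4) (by norm_num) (by norm_num)
      refine ⟨?_, ?_, ?_⟩ <;> linarith
    exact ⟨fun x => (key x).1, fun x => (key x).2.1, fun x => (key x).2.2⟩
  · rintro ⟨h1, h2, h3⟩ h h0 - x
    rw [divg_flux_s18 hV hU₀ hν h0.ne' x, h1, h2, h3]
    simp
end
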